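/- Let S be a commutative semiring with elements u, v ∈ S such that u·v ≠ 0 and u² = 0 = v². Then there is a trim bideterministic weighted automaton A over S and a two-letter alphabet such that no minimal weighted automaton over S whose behaviour equals ‖A‖ is bideterministic. -/

import Mathlib

/-- A weighted automaton over a semiring `S` and alphabet `α`:
a finite type of states `Q`, a transition weighting `σ`, an initial
weighting `ι` and a terminal weighting `τ`. -/
structure WeightedAutomaton (S : Type) [Semiring S] (α : Type) : Type 1 where
  Q : Type
  [fintypeQ : Fintype Q]
  σ : Q → α → Q → S
  ι : Q → S
  τ : Q → S

namespace WeightedAutomaton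

attribute [instance] fintypeQ

variable {S : Type} [Semiring S] {α : Type}

/-- The "future" of a state on a word: the sum, over all runs from this state
upon the word, of the product of the transition weights times the terminal
weight of the last state.  (Sequences of states using a zero-weight transition
contribute zero, so this is exactly the sum over runs.) -/
def future (A : WeightedAutomaton S α) : List α → A.Q → S
  | [], q => A.τ q
  | c :: w, q => ∑ p : A.Q, A.σ q c p * A.future w p

/-- The behaviour of a weighted automaton: the series sending each word `w`
to the sum of the monomial weights `ι(q₀)·σ(q₀,c₁,q₁)⋯σ(q_{n−1},cₙ,qₙ)·τ(qₙ)`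
of all runs of the automaton upon `w`. -/
def behaviour (A : WeightedAutomaton S α) (w : List α) : S :=
  ∑ q : A.Q, A.ι q * A.future w q

/-- A weighted automaton is bideterministic if at most one state has nonzero
initial weight, at most one state has nonzero terminal weight, and for every
letter each state has at most one outgoing and at most one incoming transition
with nonzero weight upon that letter. -/
def Bideterministic (A : WeightedAutomaton S α) : Prop :=
  (∀ p q, A.ι p ≠ 0 → A.ι q ≠ 0 → p = q) ∧
  (∀ p q, A.τ p ≠ 0 → A.τ q ≠ 0 → p = q) ∧
  (∀ p c q q', A.σ p c q ≠ 0 → A.σ p c q' ≠ 0 → q = q') ∧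
  (∀ p p' c q, A.σ p c q ≠ 0 → A.σ p' c q ≠ 0 → p = p')

/-- `A.IsPath q l` : starting in state `q`, the list `l` of (letter, next state)
pairs follows transitions all of which have nonzero weight, i.e. it is a run. -/
def IsPath (A : WeightedAutomaton S α) : A.Q → List (α × A.Q) → Prop
  | _, [] => True
  | q, (c, q') :: l => A.σ q c q' ≠ 0 ∧ A.IsPath q' l

/-- The last state of a path. -/
def pathEnd (A : WeightedAutomaton S α) : A.Q → List (α × A.Q) → A.Q
  | q, [] => q
  | _, (_, q') :: l => A.pathEnd q' l

/-- The product of the transition weights along a path. -/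
def pathWeight (A : WeightedAutomaton S α) : A.Q → List (α × A.Q) → S
  | _, [] => 1
  | q, (c, q') :: l => A.σ q c q' * A.pathWeight q' l

/-- A state is accessible if some run from a state with nonzero initial weight
ends in it. -/
def Accessible (A : WeightedAutomaton S α) (q : A.Q) : Prop :=
  ∃ p l, A.ι p ≠ 0 ∧ A.IsPath p l ∧ A.pathEnd p l = q

/-- A state is coaccessible if some run from it ends in a state with nonzero
terminal weight. -/
def Coaccessible (A : WeightedAutomaton S α) (q : A.Q) : Prop :=
  ∃ l, A.IsPath q l ∧ A.τ (A.pathEnd q l) ≠ 0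

/-- A weighted automaton is trim if all its states are accessible and
coaccessible. -/
def Trim (A : WeightedAutomaton S α) : Prop :=
  ∀ q, A.Accessible q ∧ A.Coaccessible q

/-- A weighted automaton is semantically trim if every state lies on some run
whose monomial weight is nonzero. -/
def SemanticallyTrim (A : WeightedAutomaton S α) : Prop :=
  ∀ q, ∃ p l, A.IsPath p l ∧ (q = p ∨ q ∈ l.map Prod.snd) ∧
    A.ι p * A.pathWeight p l * A.τ (A.pathEnd p l) ≠ 0

/-- The number of states of a weighted automaton. -/
def states (A : WeightedAutomaton S α) : ℕ := Fintype.card A.Q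

/-- A weighted automaton is minimal if every weighted automaton over the same
semiring and alphabet with the same behaviour has at least as many states. -/
def Minimal (A : WeightedAutomaton S α) : Prop :=
  ∀ B : WeightedAutomaton S α, B.behaviour = A.behaviour → A.states ≤ B.states

end WeightedAutomaton

/-!
Write `a = true` and `b = false`. The automaton `splitAutomaton u v` has behaviour
`uv · aaa + uv · baba + bb`. Its states `upper` and `lower` can be merged into a single state at
the price of the spurious words `aba`, of weight `u² = 0`, and `baaa`, of weight `v² = 0`, so five
states suffice in general.

A bideterministic automaton needs six. All words leading a deterministic automaton to a given
state have proportional rows in the Hankel matrix `(x, z) ↦ r (xz)`, so words whose rows have a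
nonvanishing `2 × 2` minor lead to different states; codeterminism propagates this from `x, y` to
`xc, yc`. For the behaviour above, minors and propagation together separate the six prefixes
`ε, b, bb, a, aa, ba`. The word `bb` of weight `1` is there because `(uv)² = 0`: without it
all minors would vanish.
-/

namespace WeightedAutomaton

section Semiring

variable {S : Type} [Semiring S] {α : Type} {A : WeightedAutomaton S α}

lemma isPath_append {p : A.Q} {l l' : List (α × A.Q)} :
    A.IsPath p (l ++ l') ↔ A.IsPath p l ∧ A.IsPath (A.pathEnd p l) l' := by
  induction l generalizing p with
  | nil => simp [IsPath, pathEnd]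
  | cons _ _ ih => simp [IsPath, pathEnd, ih, and_assoc]

lemma pathEnd_append (p : A.Q) (l l' : List (α × A.Q)) :
    A.pathEnd p (l ++ l') = A.pathEnd (A.pathEnd p l) l' := by
  induction l generalizing p with
  | nil => rfl
  | cons e _ ih => exact ih e.2

lemma Accessible.step {p q : A.Q} {c : α} (hp : A.Accessible p) (hpq : A.σ p c q ≠ 0) :
    A.Accessible q := by
  obtain ⟨i, l, hi, hl, rfl⟩ := hp
  exact ⟨i, l ++ [(c, q)], hi, isPath_append.2 ⟨hl, hpq, trivial⟩, pathEnd_append i l _⟩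

lemma Coaccessible.step {p q : A.Q} {c : α} (hq : A.Coaccessible q) (hpq : A.σ p c q ≠ 0) :
    A.Coaccessible p := by
  obtain ⟨l, hl, hτ⟩ := hq
  exact ⟨(c, q) :: l, ⟨hpq, hl⟩, hτ⟩

/-- Some run upon the word `w` from a state with nonzero initial weight ends in `q`. -/
def ReachedBy (A : WeightedAutomaton S α) (w : List α) (q : A.Q) : Prop :=
  ∃ p l, A.ι p ≠ 0 ∧ A.IsPath p l ∧ l.map Prod.fst = w ∧ A.pathEnd p l = q

lemma ReachedBy.exists_of_append_singleton {w : List α} {c : α} {q : A.Q}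
    (h : A.ReachedBy (w ++ [c]) q) : ∃ p, A.ReachedBy w p ∧ A.σ p c q ≠ 0 := by
  obtain ⟨i, l, hi, hl, hw, rfl⟩ := h
  obtain ⟨l₁, l₂, rfl, hl₁, hl₂⟩ := List.map_eq_append_iff.1 hw
  obtain ⟨⟨c, q⟩, rfl, rfl⟩ := List.map_eq_singleton_iff.1 hl₂
  obtain ⟨hpath, hstep, -⟩ := isPath_append.1 hl
  rw [pathEnd_append]
  exact ⟨A.pathEnd i l₁, ⟨i, l₁, hi, hpath, hl₁, rfl⟩, hstep⟩

lemma exists_isPath_of_future_append_ne_zero {x z : List α} {p : A.Q}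
    (h : A.future (x ++ z) p ≠ 0) : ∃ l, A.IsPath p l ∧ l.map Prod.fst = x := by
  induction x generalizing p with
  | nil => exact ⟨[], trivial, rfl⟩
  | cons c x ih =>
    obtain ⟨q, -, hq⟩ := Finset.exists_ne_zero_of_sum_ne_zero h
    obtain ⟨l, hl, rfl⟩ := ih (right_ne_zero_of_mul hq)
    exact ⟨(c, q) :: l, ⟨left_ne_zero_of_mul hq, hl⟩, rfl⟩

lemma exists_reachedBy_of_behaviour_append_ne_zero {x z : List α}
    (h : A.behaviour (x ++ z) ≠ 0) : ∃ q, A.ReachedBy x q := by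
  obtain ⟨p, -, hp⟩ := Finset.exists_ne_zero_of_sum_ne_zero h
  obtain ⟨l, hl, hx⟩ := exists_isPath_of_future_append_ne_zero (right_ne_zero_of_mul hp)
  exact ⟨A.pathEnd p l, p, l, left_ne_zero_of_mul hp, hl, hx, rfl⟩

/-- At most one state has nonzero initial weight, and each state has at most one outgoing
transition of nonzero weight upon each letter. -/
def Deterministic (A : WeightedAutomaton S α) : Prop :=
  (∀ p q, A.ι p ≠ 0 → A.ι q ≠ 0 → p = q) ∧
  (∀ p c q q', A.σ p c q ≠ 0 → A.σ p c q' ≠ 0 → q = q')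

lemma Bideterministic.deterministic (hA : A.Bideterministic) : A.Deterministic :=
  ⟨hA.1, hA.2.2.1⟩

lemma Deterministic.behaviour_eq (hA : A.Deterministic) {p : A.Q} (hp : A.ι p ≠ 0)
    (w : List α) : A.behaviour w = A.ι p * A.future w p :=
  Fintype.sum_eq_single p fun q hq => by
    rw [not_not.1 fun hιq => hq (hA.1 q p hιq hp), zero_mul]

lemma Deterministic.future_cons (hA : A.Deterministic) {p q : A.Q} {c : α}
    (hpq : A.σ p c q ≠ 0) (w : List α) : A.future (c :: w) p = A.σ p c q * A.future w q :=
  Fintype.sum_eq_single q fun r hr => by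
    rw [not_not.1 fun hσr => hr (hA.2 p c r q hσr hpq), zero_mul]

lemma Deterministic.future_append (hA : A.Deterministic) {p : A.Q} {l : List (α × A.Q)}
    (hl : A.IsPath p l) (z : List α) :
    A.future (l.map Prod.fst ++ z) p = A.pathWeight p l * A.future z (A.pathEnd p l) := by
  induction l generalizing p with
  | nil => exact (one_mul _).symm
  | cons e l ih =>
    calc A.future (e.1 :: (l.map Prod.fst ++ z)) p
        = A.σ p e.1 e.2 * A.future (l.map Prod.fst ++ z) e.2 := hA.future_cons hl.1 _
      _ = A.σ p e.1 e.2 * A.pathWeight e.2 l * A.future z (A.pathEnd e.2 l) := by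
        rw [ih hl.2, mul_assoc]

lemma Deterministic.exists_behaviour_append_eq (hA : A.Deterministic) {x : List α} {q : A.Q}
    (hq : A.ReachedBy x q) : ∃ s, ∀ z, A.behaviour (x ++ z) = s * A.future z q := by
  obtain ⟨p, l, hp, hl, rfl, rfl⟩ := hq
  exact ⟨A.ι p * A.pathWeight p l, fun z => by
    rw [hA.behaviour_eq hp, hA.future_append hl, mul_assoc]⟩

/-- A sufficient condition on a series `r` for the words `x` and `y` never to lead a
bideterministic automaton with behaviour `r` to the same state: a `2 × 2` minor of the Hankel
matrix of `r` in the rows `x` and `y` is nonzero, or this holds after removing a common suffix.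
The minor is expressed without subtraction. -/
inductive Separated (r : List α → S) : List α → List α → Prop
  | of_minor_ne {x y : List α} (z z' : List α)
      (h : r (x ++ z) * r (y ++ z') ≠ r (x ++ z') * r (y ++ z)) : Separated r x y
  | append_singleton {x y : List α} (h : Separated r x y) (c : α) :
      Separated r (x ++ [c]) (y ++ [c])

lemma Separated.of_eq_one_of_eq_zero {r : List α → S} {x y : List α} (z : List α)
    (hx : r (x ++ z) = 1) (hy : r (y ++ z) = 0) (hy' : ∃ z', r (y ++ z') ≠ 0) :
    Separated r x y := by
  obtain ⟨z', hz'⟩ := hy'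
  exact .of_minor_ne z z' (by rwa [hx, hy, one_mul, mul_zero])

end Semiring

section CommSemiring

variable {S : Type} [CommSemiring S] {α : Type} {A : WeightedAutomaton S α}

lemma Bideterministic.ne_of_separated (hA : A.Bideterministic) {x y : List α}
    (hxy : Separated A.behaviour x y) {p q : A.Q} (hp : A.ReachedBy x p)
    (hq : A.ReachedBy y q) : p ≠ q := by
  induction hxy generalizing p q with
  | of_minor_ne z z' h =>
    rintro rfl
    obtain ⟨s, hs⟩ := hA.deterministic.exists_behaviour_append_eq hp
    obtain ⟨t, ht⟩ := hA.deterministic.exists_behaviour_append_eq hq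
    exact h (by simp only [hs, ht]; ring)
  | append_singleton _ c ih =>
    rintro rfl
    obtain ⟨p', hp', hpσ⟩ := hp.exists_of_append_singleton
    obtain ⟨q', hq', hqσ⟩ := hq.exists_of_append_singleton
    exact ih hp' hq' (hA.2.2.2 p' q' c p hpσ hqσ)

theorem Bideterministic.length_le_states (hA : A.Bideterministic) {l : List (List α)}
    (hsupp : ∀ x ∈ l, ∃ z, A.behaviour (x ++ z) ≠ 0)
    (hsep : l.Pairwise (Separated A.behaviour)) : l.length ≤ A.states := by
  have hreach : ∀ x ∈ l, ∃ q, A.ReachedBy x q := fun x hx =>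
    (hsupp x hx).elim fun _ => exists_reachedBy_of_behaviour_append_ne_zero
  choose state hstate using hreach
  have hnodup : (l.pmap state fun _ => id).Nodup :=
    hsep.pmap _ fun x hx y hy hxy => hA.ne_of_separated hxy (hstate x hx) (hstate y hy)
  simpa only [List.length_pmap, states] using hnodup.length_le_card

end CommSemiring

section OfStep

variable {S : Type} [Semiring S] {α Q : Type} [Fintype Q] [DecidableEq Q]

/-- The deterministic automaton in which each state `p` has, upon each letter `c`, a single
transition, with weight `(step p c).1` and target `(step p c).2`. A missing transition is encoded
by weight `0` and an arbitrary target. -/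
abbrev ofStep (step : Q → α → S × Q) (start final : Q) : WeightedAutomaton S α where
  Q := Q
  σ p c q := if q = (step p c).2 then (step p c).1 else 0
  ι q := if q = start then 1 else 0
  τ q := if q = final then 1 else 0

variable (step : Q → α → S × Q) (start final : Q)

@[simp] lemma ofStep_future_nil (q : Q) :
    (ofStep step start final).future [] q = if q = final then 1 else 0 := rfl

@[simp] lemma ofStep_future_cons (c : α) (w : List α) (p : Q) :
    (ofStep step start final).future (c :: w) p =
      (step p c).1 * (ofStep step start final).future w (step p c).2 := by
  simp [future]

@[simp] lemma ofStep_behaviour (w : List α) :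
    (ofStep step start final).behaviour w = (ofStep step start final).future w start := by
  simp [behaviour]

variable {step}

lemma ofStep_bideterministic
    (hstep : ∀ p p' c, (step p c).1 ≠ 0 → (step p' c).1 ≠ 0 →
      (step p c).2 = (step p' c).2 → p = p') :
    (ofStep step start final).Bideterministic := by
  simp only [Bideterministic, ne_eq, ite_eq_right_iff, Classical.not_imp]
  refine ⟨?_, ?_, ?_, ?_⟩
  · exact fun p q hp hq => hp.1.trans hq.1.symm
  · exact fun p q hp hq => hp.1.trans hq.1.symm
  · exact fun p c q q' hq hq' => hq.1.trans hq'.1.symm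
  · exact fun p p' c q hp hp' => hstep p p' c hp.2 hp'.2 (hp.1.symm.trans hp'.1)

end OfStep

section SplitAndMerged

/-- The states of `splitAutomaton`. -/
inductive SplitState
  | start | branch | upper | lower | join | final
  deriving DecidableEq

instance : Fintype SplitState where
  elems := {.start, .branch, .upper, .lower, .join, .final}
  complete q := by cases q <;> decide

/-- The states of `mergedAutomaton`; `middle` replaces both `upper` and `lower`. -/
inductive MergedState
  | start | branch | middle | join | final
  deriving DecidableEq

instance : Fintype MergedState where
  elems := {.start, .branch, .middle, .join, .final}
  complete q := by cases q <;> decide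

variable {S : Type} [Semiring S] (u v : S)

/-- The transitions of `splitAutomaton`. -/
def splitStep : SplitState → Bool → S × SplitState
  | .start, true => (u, .upper)
  | .start, false => (1, .branch)
  | .branch, true => (v, .lower)
  | .branch, false => (1, .final)
  | .upper, true => (v, .join)
  | .lower, false => (u, .join)
  | .join, true => (1, .final)
  | q, _ => (0, q)

/-- The transitions of `mergedAutomaton`. -/
def mergedStep : MergedState → Bool → S × MergedState
  | .start, true => (u, .middle)
  | .start, false => (1, .branch)
  | .branch, true => (v, .middle)
  | .branch, false => (1, .final)
  | .middle, true => (v, .join)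
  | .middle, false => (u, .join)
  | .join, true => (1, .final)
  | q, _ => (0, q)

/-- The bideterministic automaton with behaviour `uv · aaa + vu · baba + bb`. -/
abbrev splitAutomaton : WeightedAutomaton S Bool :=
  ofStep (splitStep u v) .start .final

/-- The five-state automaton obtained from `splitAutomaton` by merging `upper` and `lower`. It has
the same behaviour when `u² = v² = 0`. -/
abbrev mergedAutomaton : WeightedAutomaton S Bool :=
  ofStep (mergedStep u v) .start .final

lemma splitAutomaton_bideterministic : (splitAutomaton u v).Bideterministic := by
  refine ofStep_bideterministic _ _ fun p p' c => ?_
  cases c <;> cases p <;> cases p' <;> simp [splitStep]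

variable {u v} in
lemma splitAutomaton_trim (huv : u * v ≠ 0) : (splitAutomaton u v).Trim := by
  have hu : u ≠ 0 := left_ne_zero_of_mul huv
  have hv : v ≠ 0 := right_ne_zero_of_mul huv
  have : Nontrivial S := nontrivial_of_ne _ _ huv
  have hstep (p : SplitState) (c : Bool) (h : (splitStep u v p c).1 ≠ 0) :
      (splitAutomaton u v).σ p c (splitStep u v p c).2 ≠ 0 := by simpa using h
  have start_branch := hstep .start false one_ne_zero
  have start_upper := hstep .start true hu
  have branch_lower := hstep .branch true hv
  have upper_join := hstep .upper true hv
  have lower_join := hstep .lower false hu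
  have join_final := hstep .join true one_ne_zero
  have acc_start : (splitAutomaton u v).Accessible .start :=
    ⟨.start, [], by simp, trivial, rfl⟩
  have acc_branch := acc_start.step start_branch
  have acc_upper := acc_start.step start_upper
  have acc_join := acc_upper.step upper_join
  have coacc_final : (splitAutomaton u v).Coaccessible .final :=
    ⟨[], trivial, by simp [pathEnd]⟩
  have coacc_join := coacc_final.step join_final
  have coacc_upper := coacc_join.step upper_join
  have coacc_lower := coacc_join.step lower_join
  rintro (_ | _ | _ | _ | _ | _)
  · exact ⟨acc_start, coacc_upper.step start_upper⟩
  · exact ⟨acc_branch, coacc_lower.step branch_lower⟩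
  · exact ⟨acc_upper, coacc_upper⟩
  · exact ⟨acc_branch.step branch_lower, coacc_lower⟩
  · exact ⟨acc_join, coacc_join⟩
  · exact ⟨acc_join.step join_final, coacc_final⟩

lemma mergedAutomaton_future_final (w : List Bool) :
    (mergedAutomaton u v).future w .final = (splitAutomaton u v).future w .final := by
  cases w <;> simp [mergedStep, splitStep]

lemma mergedAutomaton_future_join (w : List Bool) :
    (mergedAutomaton u v).future w .join = (splitAutomaton u v).future w .join := by
  rcases w with _ | ⟨_ | _, w⟩ <;>
    simp [mergedStep, splitStep, mergedAutomaton_future_final]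

lemma mergedAutomaton_future_middle (w : List Bool) :
    (mergedAutomaton u v).future w .middle =
      (splitAutomaton u v).future w .upper + (splitAutomaton u v).future w .lower := by
  rcases w with _ | ⟨_ | _, w⟩ <;>
    simp [mergedStep, splitStep, mergedAutomaton_future_join]

variable {u v}

lemma mul_splitAutomaton_future_upper_eq_zero (hv : v * v = 0) (w : List Bool) :
    v * (splitAutomaton u v).future w .upper = 0 := by
  rcases w with _ | ⟨_ | _, w⟩ <;> simp [splitStep, ← mul_assoc, hv]

lemma mul_splitAutomaton_future_lower_eq_zero (hu : u * u = 0) (w : List Bool) :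
    u * (splitAutomaton u v).future w .lower = 0 := by
  rcases w with _ | ⟨_ | _, w⟩ <;> simp [splitStep, ← mul_assoc, hu]

lemma mergedAutomaton_future_branch (hv : v * v = 0) (w : List Bool) :
    (mergedAutomaton u v).future w .branch = (splitAutomaton u v).future w .branch := by
  rcases w with _ | ⟨_ | _, w⟩ <;>
    simp [mergedStep, splitStep, mergedAutomaton_future_final, mergedAutomaton_future_middle,
      mul_add, mul_splitAutomaton_future_upper_eq_zero hv]

lemma mergedAutomaton_future_start (hu : u * u = 0) (hv : v * v = 0) (w : List Bool) :
    (mergedAutomaton u v).future w .start = (splitAutomaton u v).future w .start := by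
  rcases w with _ | ⟨_ | _, w⟩ <;>
    simp [mergedStep, splitStep, mergedAutomaton_future_branch hv, mergedAutomaton_future_middle,
      mul_add, mul_splitAutomaton_future_lower_eq_zero hu]

lemma mergedAutomaton_behaviour_eq (hu : u * u = 0) (hv : v * v = 0) :
    (mergedAutomaton u v).behaviour = (splitAutomaton u v).behaviour := by
  funext w
  rw [ofStep_behaviour, ofStep_behaviour, mergedAutomaton_future_start hu hv]

end SplitAndMerged

section LowerBound

variable {S : Type} [CommSemiring S] {u v : S}

/-- Prefixes of the words `aaa`, `baba` and `bb`, one for each state of `splitAutomaton`. -/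
def splitPrefixes : List (List Bool) :=
  [[], [false], [false, false], [true], [false, true], [true, true]]

lemma exists_splitAutomaton_behaviour_append_ne_zero (huv : u * v ≠ 0) :
    ∀ x ∈ splitPrefixes, ∃ z, (splitAutomaton u v).behaviour (x ++ z) ≠ 0 := by
  have : Nontrivial S := nontrivial_of_ne _ _ huv
  have hvu : v * u ≠ 0 := mul_comm u v ▸ huv
  simp only [splitPrefixes, List.forall_mem_cons, List.not_mem_nil, IsEmpty.forall_iff,
    implies_true, and_true]
  refine ⟨⟨[false, false], ?_⟩, ⟨[false], ?_⟩, ⟨[], ?_⟩, ⟨[true, true], ?_⟩,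
    ⟨[false, true], ?_⟩, ⟨[true], ?_⟩⟩ <;>
    simp [splitStep, huv, hvu]

lemma splitPrefixes_pairwise_separated (huv : u * v ≠ 0) :
    splitPrefixes.Pairwise (Separated (splitAutomaton u v).behaviour) := by
  have hsupp := exists_splitAutomaton_behaviour_append_ne_zero huv
  have sep_nil : ∀ y ∈ splitPrefixes.drop 1, Separated (splitAutomaton u v).behaviour [] y := by
    refine fun y hy => .of_eq_one_of_eq_zero [false, false] ?_ ?_
      (hsupp y (List.mem_of_mem_drop hy))
    · simp [splitStep]
    · fin_cases hy <;> simp [splitStep]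
  have sep_b : ∀ y ∈ splitPrefixes.drop 2, Separated (splitAutomaton u v).behaviour [false] y := by
    refine fun y hy => .of_eq_one_of_eq_zero [false] ?_ ?_ (hsupp y (List.mem_of_mem_drop hy))
    · simp [splitStep]
    · fin_cases hy <;> simp [splitStep]
  have sep_bb : ∀ y ∈ splitPrefixes.drop 3,
      Separated (splitAutomaton u v).behaviour [false, false] y := by
    refine fun y hy => .of_eq_one_of_eq_zero [] ?_ ?_ (hsupp y (List.mem_of_mem_drop hy))
    · simp [splitStep]
    · fin_cases hy <;> simp [splitStep]
  have sep_a_ba : Separated (splitAutomaton u v).behaviour [true] [false, true] :=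
    (sep_nil [false] (by decide)).append_singleton true
  have sep_a_aa : Separated (splitAutomaton u v).behaviour [true] [true, true] :=
    (sep_nil [true] (by decide)).append_singleton true
  have sep_ba_aa : Separated (splitAutomaton u v).behaviour [false, true] [true, true] :=
    (sep_b [true] (by decide)).append_singleton true
  exact .cons sep_nil (.cons sep_b (.cons sep_bb (by simp [sep_a_ba, sep_a_aa, sep_ba_aa])))

theorem Bideterministic.six_le_states {B : WeightedAutomaton S Bool} (hB : B.Bideterministic)
    (huv : u * v ≠ 0) (hbeh : B.behaviour = (splitAutomaton u v).behaviour) :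
    6 ≤ B.states :=
  hB.length_le_states (l := splitPrefixes)
    (hbeh ▸ exists_splitAutomaton_behaviour_append_ne_zero huv)
    (hbeh ▸ splitPrefixes_pairwise_separated huv)

end LowerBound

end WeightedAutomaton

/-- Over a commutative semiring with elements `u, v` such that `u*v ≠ 0` and
`u² = 0 = v²`, there is a trim bideterministic weighted automaton over a
two-letter alphabet none of whose equivalent minimal automata is
bideterministic. -/
theorem exists_trim_bideterministic_no_minimal_bideterministic_of_sq_eq_zero
    {S : Type} [CommSemiring S] (u v : S)
    (huv : u * v ≠ 0) (hu : u * u = 0) (hv : v * v = 0) :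
    ∃ A : WeightedAutomaton S Bool, A.Trim ∧ A.Bideterministic ∧
      ∀ B : WeightedAutomaton S Bool,
        B.behaviour = A.behaviour → B.Minimal → ¬ B.Bideterministic := by
  refine ⟨WeightedAutomaton.splitAutomaton u v, WeightedAutomaton.splitAutomaton_trim huv,
    WeightedAutomaton.splitAutomaton_bideterministic u v, fun B hbeh hmin hB => ?_⟩
  have lower_bound : 6 ≤ B.states := hB.six_le_states huv hbeh
  have upper_bound : B.states ≤ 5 :=
    hmin (WeightedAutomaton.mergedAutomaton u v)
      ((WeightedAutomaton.mergedAutomaton_behaviour_eq hu hv).trans hbeh.symm)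
  omega
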